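/- Let N ≥ 1 and s ∈ (0,1). Let A be an N×N real matrix and let w, v : ℝ^N → ℝ be smooth with compact support. Define the kernel ω_A(y,z) := (c_{N,s}/2) · [ 2·tr(A) − (N+2s) · ((A(y−z)) · (y−z)) / |y−z|² ] for y ≠ z. Then the double integral ∬_{ℝ^N×ℝ^N} (w(y) − w(z)) (v(y) − v(z)) · |y−z|^{−N−2s} · ω_A(y,z) dy dz is absolutely convergent and equals − ∫_{ℝ^N} (∇w(z) · (Az)) · (−Δ)^s v(z) dz − ∫_{ℝ^N} (∇v(z) · (Az)) · (−Δ)^s w(z) dz. -/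

import Mathlib

/-!
The identity is the infinitesimal form of a linear change of variables. Write `L` for the linear
map `x ↦ A x`, `δu = u(y) - u(z)`, `K = |y - z|^(-N-2s)` and `f = δw δv K`. The flow
`(y, z) ↦ (exp(tL) y, exp(tL) z)` multiplies volume by `exp(2 t tr A)` (`det_exp_smul`), so the
derivative `f'` of `f` along it satisfies `∫ f' = -2 tr A ∫ f` as soon as `f` and `f'` are
integrable (`integral_flow_deriv`): integrate `f'` along the flow over `[0, 1]` and exchange the
integrals. The singular diagonal causes no trouble since the flow preserves it and `f` vanishes
there. With `φ = ∇w · Az` and `ψ = ∇v · Az`,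
`f' = δφ δv K + δw δψ K - (N + 2s) f ⟨A(y-z), y-z⟩ / |y-z|²`,
so `2 tr A ∫ f` and the last term of `∫ f'` add up to the double integral against `ω_A`, up to the
factor `c_{N,s}/2`, and this sum is minus the Gagliardo forms of `(φ, v)` and `(ψ, w)`.

Integrability of `δφ δψ K` (`integrable_form`) comes from the Lipschitz bound and from
`min(|h|, 1)² |h|^(-N-2s)` being integrable. The Gagliardo form is turned into the pairing of `φ`
with the fractional Laplacian of `ψ` (`integral_form_eq`) by substituting `y = z + h`, translating
in `z` at fixed `h`, and Fubini, justified by a second-difference bound on `ψ`.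
-/

open MeasureTheory
open scoped RealInnerProductSpace

noncomputable section

/-- The normalizing constant `c_{N,s} = π^{-N/2} s 4^s Γ((N+2s)/2) / Γ(1-s)`. -/
def cNs (N : ℕ) (s : ℝ) : ℝ :=
  Real.pi ^ (-(N : ℝ) / 2) * s * (4 : ℝ) ^ s *
    Real.Gamma (((N : ℝ) + 2 * s) / 2) / Real.Gamma (1 - s)

/-- The fractional Laplacian, defined pointwise by
`(-Δ)^s u(x) = (c_{N,s}/2) ∫ (2u(x) - u(x+z) - u(x-z)) |z|^{-N-2s} dz`. -/
def fracLap (N : ℕ) (s : ℝ) (u : EuclideanSpace ℝ (Fin N) → ℝ)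
    (x : EuclideanSpace ℝ (Fin N)) : ℝ :=
  cNs N s / 2 * ∫ z : EuclideanSpace ℝ (Fin N),
    (2 * u x - u (x + z) - u (x - z)) * ‖z‖ ^ (-(N : ℝ) - 2 * s)

/-- The kernel `ω_A(y,z) = (c_{N,s}/2) [2 tr A - (N+2s) ⟨A(y-z), y-z⟩ / |y-z|²]`. -/
def omegaA (N : ℕ) (s : ℝ) (A : Matrix (Fin N) (Fin N) ℝ)
    (y z : EuclideanSpace ℝ (Fin N)) : ℝ :=
  cNs N s / 2 * (2 * A.trace -
    ((N : ℝ) + 2 * s) * ⟪Matrix.toEuclideanLin A (y - z), y - z⟫ / ‖y - z‖ ^ 2)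

/-! ### The determinant of the exponential of a linear map -/

/-- The derivative of a curve of determinants at the identity depends only on the first-order
behaviour of the curve, so it can be computed on `1 + t • A`. -/
lemma hasDerivAt_matrix_det {n : ℕ} {M : ℝ → Matrix (Fin n) (Fin n) ℝ}
    {A : Matrix (Fin n) (Fin n) ℝ} (hM0 : M 0 = 1)
    (hM : ∀ i j, HasDerivAt (fun t => M t i j) (A i j) 0) :
    HasDerivAt (fun t => (M t).det) A.trace 0 := by
  have key : ∀ P : ℝ → Matrix (Fin n) (Fin n) ℝ, P 0 = 1 →
      (∀ i j, HasDerivAt (fun t => P t i j) (A i j) 0) →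
      HasDerivAt (fun t => (P t).det) (∑ σ : Equiv.Perm (Fin n), (Equiv.Perm.sign σ : ℝ) *
        ∑ i, (∏ j ∈ Finset.univ.erase i, (1 : Matrix (Fin n) (Fin n) ℝ) (σ j) j) • A (σ i) i)
        0 := by
    intro P hP0 hP
    simp only [Matrix.det_apply']
    refine HasDerivAt.fun_sum fun σ _ => ?_
    have h := HasDerivAt.fun_finsetProd (u := (Finset.univ : Finset (Fin n)))
      (f := fun i t => P t (σ i) i) (f' := fun i => A (σ i) i) (x := 0) (fun i _ => hP (σ i) i)
    simp only [hP0] at h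
    exact h.const_mul _
  have h1 := key (fun t => 1 + t • A) (by simp) (fun i j => by
    simpa using ((hasDerivAt_id (0 : ℝ)).mul_const (A i j)).const_add
      ((1 : Matrix (Fin n) (Fin n) ℝ) i j))
  have h2 : HasDerivAt (fun t : ℝ => (1 + t • A).det) A.trace 0 := by
    rw [funext fun t : ℝ => Matrix.det_one_add_smul t A]
    have h3 := (Polynomial.hasDerivAt (Matrix.det (1 + (Polynomial.X : Polynomial ℝ) •
      A.map Polynomial.C)).divX.divX 0)
    have h4 := ((hasDerivAt_id (0 : ℝ)).const_mul A.trace).const_add 1 |>.add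
      (h3.mul ((hasDerivAt_id (0 : ℝ)).pow 2))
    refine h4.congr_deriv ?_
    simp
  rw [← h1.unique h2]
  exact key M hM0 hM

/-- Liouville's formula `det (exp (tL)) = exp (t tr L)`. The left-hand side is multiplicative in `t`
with derivative `tr L` at `0`, hence solves `d' = (tr L) d`. -/
lemma det_exp_smul {E : Type*} [NormedAddCommGroup E] [NormedSpace ℝ E] [FiniteDimensional ℝ E]
    (L : E →L[ℝ] E) (t : ℝ) :
    LinearMap.det (NormedSpace.exp (t • L) : E →L[ℝ] E).toLinearMap =
      Real.exp (t * LinearMap.trace ℝ E L.toLinearMap) := by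
  let b := Module.finBasis ℝ E
  set d : ℝ → ℝ := fun t => LinearMap.det (NormedSpace.exp (t • L) : E →L[ℝ] E).toLinearMap
    with hd
  set τ := LinearMap.trace ℝ E L.toLinearMap with hτ
  have hadd : ∀ x y, d (x + y) = d x * d y := by
    intro x y
    have hc : Commute (x • L) (y • L) := (Commute.refl L).smul_left x |>.smul_right y
    simp only [hd, add_smul]
    let _ : NormedAlgebra ℚ (E →L[ℝ] E) := .restrictScalars ℚ ℝ _
    rw [NormedSpace.exp_add_of_commute (𝔸 := E →L[ℝ] E) hc, ← map_mul]
    rfl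
  have hd0 : HasDerivAt d τ 0 := by
    have h := hasDerivAt_matrix_det
      (M := fun t => LinearMap.toMatrix b b (NormedSpace.exp (t • L) : E →L[ℝ] E).toLinearMap)
      (A := LinearMap.toMatrix b b L.toLinearMap) (by simp) (fun i j => by
        have h1 := hasDerivAt_exp_smul_const (𝕂 := ℝ) L (0 : ℝ)
        simp only [zero_smul, NormedSpace.exp_zero, one_mul] at h1
        have h2 := h1.clm_apply (hasDerivAt_const (0 : ℝ) (b j))
        have h3 := ((b.coord i).toContinuousLinearMap.hasFDerivAt).comp_hasDerivAt 0 h2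
        simp only [LinearMap.toMatrix_apply]
        refine h3.congr_deriv ?_
        simp)
    simp only [LinearMap.det_toMatrix] at h
    rw [hτ, LinearMap.trace_eq_matrix_trace ℝ b]
    exact h
  have hder : ∀ x, HasDerivAt d (τ * d x) x := by
    intro x
    have h1 : HasDerivAt (fun y => d x * d (y - x)) (d x * τ) x := by
      refine HasDerivAt.const_mul _ ?_
      have := HasDerivAt.comp_sub_const (f := d) (f' := τ) x x (by simpa using hd0)
      exact this
    have h2 : (fun y => d x * d (y - x)) = d := by
      funext y; rw [← hadd]; simp
    rw [h2] at h1
    rwa [mul_comm]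
  have hconst : ∀ x, HasDerivAt (fun x => d x * Real.exp (-(x * τ))) 0 x := by
    intro x
    have h := (hder x).mul (((hasDerivAt_id x).mul_const τ).neg.exp)
    refine h.congr_deriv ?_
    simp; ring
  have hc := is_const_of_deriv_eq_zero (fun x => (hconst x).differentiableAt)
    (fun x => (hconst x).deriv) t 0
  have : d 0 = 1 := by simp [hd]
  simp only [this, zero_mul, neg_zero, Real.exp_zero, mul_one] at hc
  change d t = _
  rw [Real.exp_neg] at hc
  field_simp at hc
  exact hc

/-! ### Integration along a linear flow -/

lemma flow_map {F : Type*} [NormedAddCommGroup F] [NormedSpace ℝ F] [FiniteDimensional ℝ F]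
    [MeasurableSpace F] [BorelSpace F] (μ : Measure F) [μ.IsAddHaarMeasure]
    (T : F →L[ℝ] F) (a : ℝ) (hT : LinearMap.det T.toLinearMap = Real.exp a) :
    Measure.map T μ = ENNReal.ofReal (Real.exp (-a)) • μ := by
  have := Measure.map_linearMap_addHaar_eq_smul_addHaar μ (f := T.toLinearMap)
    (by rw [hT]; positivity)
  rw [hT, abs_of_pos (by positivity), ← Real.exp_neg] at this
  exact this

lemma flow_measurableEmbedding {F : Type*} [NormedAddCommGroup F] [NormedSpace ℝ F]
    [FiniteDimensional ℝ F]
    [MeasurableSpace F] [BorelSpace F]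
    (T : F →L[ℝ] F) (a : ℝ) (hT : LinearMap.det T.toLinearMap = Real.exp a) :
    MeasurableEmbedding T := by
  have h : LinearMap.det T.toLinearMap ≠ 0 := by rw [hT]; positivity
  have hinj : Function.Injective T := (LinearMap.equivOfDetNeZero T.toLinearMap h).injective
  exact T.continuous.measurableEmbedding hinj

lemma flow_integral {F : Type*} [NormedAddCommGroup F] [NormedSpace ℝ F] [FiniteDimensional ℝ F]
    [MeasurableSpace F] [BorelSpace F] (μ : Measure F) [μ.IsAddHaarMeasure]
    (T : F →L[ℝ] F) (a : ℝ) (hT : LinearMap.det T.toLinearMap = Real.exp a) (f : F → ℝ) :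
    ∫ p, f (T p) ∂μ = Real.exp (-a) * ∫ p, f p ∂μ := by
  rw [← (flow_measurableEmbedding T a hT).integral_map, flow_map μ T a hT, integral_smul_measure]
  simp [ENNReal.toReal_ofReal, Real.exp_nonneg]

lemma flow_integrable {F : Type*} [NormedAddCommGroup F] [NormedSpace ℝ F] [FiniteDimensional ℝ F]
    [MeasurableSpace F] [BorelSpace F] (μ : Measure F) [μ.IsAddHaarMeasure]
    (T : F →L[ℝ] F) (a : ℝ) (hT : LinearMap.det T.toLinearMap = Real.exp a) {f : F → ℝ}
    (hf : Integrable f μ) :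
    Integrable (fun p => f (T p)) μ := by
  change Integrable (f ∘ T) μ
  rw [← (flow_measurableEmbedding T a hT).integrable_map_iff, flow_map μ T a hT]
  exact hf.smul_measure (by simp)

/-- If the linear maps `U t` have determinant `exp (t τ)`, and `f'` is the derivative of `f` along
the curves `t ↦ U t p`, then `∫ f' = -τ ∫ f`. Integrability of `f` and `f'` is enough: no domination
that is uniform in `t` is needed, because Fubini replaces differentiation under the integral. -/
lemma integral_flow_deriv {F : Type*} [NormedAddCommGroup F] [NormedSpace ℝ F]
    [FiniteDimensional ℝ F]
    [MeasurableSpace F] [BorelSpace F] (μ : Measure F) [μ.IsAddHaarMeasure]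
    (U : ℝ → F →L[ℝ] F) (hU : Continuous fun q : F × ℝ => U q.2 q.1) (hU0 : U 0 = 1) (τ : ℝ)
    (hdet : ∀ t, LinearMap.det (U t).toLinearMap = Real.exp (t * τ))
    {f f' : F → ℝ} (hf : Integrable f μ) (hf' : Integrable f' μ) (hm : Measurable f')
    (hder : ∀ p t, HasDerivAt (fun t => f (U t p)) (f' (U t p)) t) :
    ∫ p, f' p ∂μ = - (τ * ∫ p, f p ∂μ) := by
  set ν : Measure ℝ := volume.restrict (Set.Ioc 0 1) with hν
  have hexp : IntervalIntegrable (fun t : ℝ => Real.exp (-(t * τ))) volume 0 1 :=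
    Continuous.intervalIntegrable (by fun_prop) _ _
  have hexpν : Integrable (fun t : ℝ => Real.exp (-(t * τ))) ν :=
    (intervalIntegrable_iff_integrableOn_Ioc_of_le zero_le_one).1 hexp
  have hprod : Integrable (fun q : F × ℝ => f' (U q.2 q.1)) (μ.prod ν) := by
    have hmeas : AEStronglyMeasurable (fun q : F × ℝ => f' (U q.2 q.1)) (μ.prod ν) :=
      (hm.comp hU.measurable).aestronglyMeasurable
    rw [integrable_prod_iff' hmeas]
    refine ⟨Filter.Eventually.of_forall fun t => flow_integrable μ _ _ (hdet t) hf', ?_⟩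
    simp only [flow_integral μ _ _ (hdet _) (fun p => ‖f' p‖)]
    exact hexpν.mul_const _
  have hae : ∀ᵐ p ∂μ, ∫ t, f' (U t p) ∂ν = f (U 1 p) - f p := by
    filter_upwards [hprod.prod_right_ae] with p hp
    have h := intervalIntegral.integral_eq_sub_of_hasDerivAt (a := 0) (b := 1)
      (f := fun t => f (U t p)) (f' := fun t => f' (U t p)) (fun t _ => hder p t)
      ((intervalIntegrable_iff_integrableOn_Ioc_of_le zero_le_one).2 hp)
    rw [intervalIntegral.integral_of_le zero_le_one] at h
    rw [hν, h, hU0]; rfl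
  have h1 : ∫ p, ∫ t, f' (U t p) ∂ν ∂μ = (Real.exp (-τ) - 1) * ∫ p, f p ∂μ := by
    rw [integral_congr_ae hae, integral_sub (flow_integrable μ _ _ (hdet 1) hf) hf,
      flow_integral μ _ _ (hdet 1)]
    ring_nf
  rw [integral_integral_swap hprod] at h1
  simp only [flow_integral μ _ _ (hdet _) f'] at h1
  rw [integral_mul_const] at h1
  set J := ∫ t, Real.exp (-(t * τ)) ∂ν with hJ
  have hJi : J = ∫ t in (0:ℝ)..1, Real.exp (-(t * τ)) := by
    rw [intervalIntegral.integral_of_le zero_le_one]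
  have hJpos : 0 < J := by
    rw [hJi]
    exact intervalIntegral.intervalIntegral_pos_of_pos hexp (fun _ => Real.exp_pos _) one_pos
  have hJτ : J * τ = 1 - Real.exp (-τ) := by
    have h := intervalIntegral.integral_eq_sub_of_hasDerivAt (a := 0) (b := 1)
      (f := fun t : ℝ => - Real.exp (-(t * τ))) (f' := fun t => Real.exp (-(t * τ)) * τ)
      (fun t _ => by
        have h := (((hasDerivAt_id t).mul_const τ).neg.exp).neg
        refine h.congr_deriv ?_
        simp) (hexp.mul_const _)
    rw [intervalIntegral.integral_mul_const, ← hJi] at h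
    rw [h]; simp; ring
  -- `h1` reads `J ∫ f' = (exp (-τ) - 1) ∫ f = -J τ ∫ f`.
  have : J * (∫ p, f' p ∂μ + τ * ∫ p, f p ∂μ) = 0 := by
    rw [mul_add, h1, ← mul_assoc, hJτ]; ring
  have := (mul_eq_zero.1 this).resolve_left hJpos.ne'
  linarith

/-! ### Integrability of the Gagliardo form -/

/-- Near `0` the radial density is `r^(1-2s)`, near infinity it is `r^(-1-2s)`. -/
lemma integrable_truncated_kernel (N : ℕ) (hN : 1 ≤ N) (s : ℝ) (hs : s ∈ Set.Ioo (0 : ℝ) 1) :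
    Integrable (fun h : EuclideanSpace ℝ (Fin N) =>
      (min ‖h‖ 1) ^ 2 * ‖h‖ ^ (-(N : ℝ) - 2 * s)) := by
  obtain ⟨hs0, hs1⟩ := hs
  have : Nontrivial (EuclideanSpace ℝ (Fin N)) :=
    Module.nontrivial_of_finrank_pos (R := ℝ) (by simp; omega)
  have hfin : Module.finrank ℝ (EuclideanSpace ℝ (Fin N)) = N := by simp
  refine (integrable_fun_norm_addHaar (volume : Measure (EuclideanSpace ℝ (Fin N)))
    (f := fun r : ℝ => (min r 1) ^ 2 * r ^ (-(N : ℝ) - 2 * s))).2 ?_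
  rw [hfin, ← Set.Ioc_union_Ioi_eq_Ioi (zero_le_one' ℝ)]
  have hpow : ∀ r : ℝ, 0 < r → r ^ (N - 1) * r ^ (-(N : ℝ) - 2 * s) = r ^ (-1 - 2 * s) := by
    intro r hr
    rw [← Real.rpow_natCast, ← Real.rpow_add hr, Nat.cast_sub hN]
    congr 1; push_cast; ring
  refine IntegrableOn.union ?_ ?_
  · have h1 : IntegrableOn (fun r : ℝ => r ^ (1 - 2 * s)) (Set.Ioc 0 1) :=
      (intervalIntegrable_iff_integrableOn_Ioc_of_le zero_le_one).1
        (intervalIntegral.intervalIntegrable_rpow' (by linarith))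
    refine h1.congr_fun (fun r hr => ?_) measurableSet_Ioc
    have h2 := hpow r hr.1
    simp only [smul_eq_mul, min_eq_left hr.2]
    rw [mul_left_comm, h2, ← Real.rpow_natCast, ← Real.rpow_add hr.1]
    congr 1; push_cast; ring
  · have h1 : IntegrableOn (fun r : ℝ => r ^ (-1 - 2 * s)) (Set.Ioi 1) :=
      integrableOn_Ioi_rpow_of_lt (by linarith) one_pos
    refine h1.congr_fun (fun r hr => ?_) measurableSet_Ioi
    have hr1 : (1 : ℝ) < r := hr
    have h2 := hpow r (by linarith)
    simp only [smul_eq_mul, min_eq_right hr1.le]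
    rw [mul_left_comm, h2]; simp

lemma exists_diff_bound {E : Type*} [NormedAddCommGroup E] [NormedSpace ℝ E]
    {F : Type*} [NormedAddCommGroup F] [NormedSpace ℝ F] {φ : E → F}
    (hφ : ContDiff ℝ 1 φ) (hc : HasCompactSupport φ) :
    ∃ C : ℝ, 0 ≤ C ∧ ∀ y z, ‖φ y - φ z‖ ≤ C * min ‖y - z‖ 1 := by
  obtain ⟨K, hK⟩ := hφ.lipschitzWith_of_hasCompactSupport hc one_ne_zero
  obtain ⟨B, hB⟩ := hc.exists_bound_of_continuous hφ.continuous
  have hB0 : 0 ≤ B := (norm_nonneg _).trans (hB 0)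
  refine ⟨max K (2 * B), le_max_of_le_left K.coe_nonneg, fun y z => ?_⟩
  rw [mul_min_of_nonneg _ _ (le_max_of_le_left K.coe_nonneg)]
  refine le_min ?_ ?_
  · have := hK.dist_le_mul y z
    rw [dist_eq_norm, dist_eq_norm] at this
    exact this.trans (by gcongr; exact le_max_left _ _)
  · rw [mul_one]
    refine le_trans ?_ (le_max_right _ _)
    linarith [norm_sub_le (φ y) (φ z), hB y, hB z]

/-- For small `h` the second difference is a first difference of `x ↦ ψ (x + h) - ψ x`, whose
derivative is `O(‖h‖)`. -/
lemma exists_second_diff_bound {E : Type*} [NormedAddCommGroup E] [NormedSpace ℝ E]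
    {ψ : E → ℝ} (hψ : ContDiff ℝ 2 ψ) (hc : HasCompactSupport ψ) :
    ∃ C : ℝ, 0 ≤ C ∧ ∀ z h, ‖2 * ψ z - ψ (z + h) - ψ (z - h)‖ ≤ C * (min ‖h‖ 1) ^ 2 := by
  have hd : ContDiff ℝ 1 (fderiv ℝ ψ) := hψ.fderiv_right (by norm_num)
  obtain ⟨C, hC0, hC⟩ := exists_diff_bound hd (hc.fderiv ℝ)
  obtain ⟨B, hB⟩ := hc.exists_bound_of_continuous hψ.continuous
  have hB0 : 0 ≤ B := (norm_nonneg _).trans (hB 0)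
  refine ⟨max C (4 * B), le_max_of_le_left hC0, fun z h => ?_⟩
  rcases le_total ‖h‖ 1 with h1 | h1
  · rw [min_eq_left h1]
    have hdiff : Differentiable ℝ ψ := hψ.differentiable (by norm_num)
    have hu : ∀ x, HasFDerivAt (fun x => ψ (x + h) - ψ x)
        (fderiv ℝ ψ (x + h) - fderiv ℝ ψ x) x := fun x =>
      ((hasFDerivAt_comp_add_right h).2 (hdiff (x + h)).hasFDerivAt).sub (hdiff x).hasFDerivAt
    have := Convex.norm_image_sub_le_of_norm_hasFDerivWithin_le (𝕜 := ℝ) (s := Set.univ)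
      (f := fun x => ψ (x + h) - ψ x) (C := C * ‖h‖) (fun x _ => (hu x).hasFDerivWithinAt)
      (fun x _ => by
        have := hC (x + h) x
        rw [add_sub_cancel_left, min_eq_left h1] at this
        exact this) convex_univ (Set.mem_univ z) (Set.mem_univ (z - h))
    have e : 2 * ψ z - ψ (z + h) - ψ (z - h)
        = (ψ (z - h + h) - ψ (z - h)) - (ψ (z + h) - ψ z) := by
      rw [sub_add_cancel]; ring
    rw [e]
    refine this.trans ?_
    rw [sub_sub_cancel_left, norm_neg, mul_assoc, ← sq]
    gcongr; exact le_max_left _ _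
  · rw [min_eq_right h1, one_pow, mul_one]
    refine le_trans ?_ (le_max_right _ _)
    have a1 := hB z
    have a2 := hB (z + h)
    have a3 := hB (z - h)
    simp only [Real.norm_eq_abs, abs_le] at *
    constructor <;> linarith

/-- The integrand vanishes unless `y` or `z` lies in the support of `φ`, and is bounded by a multiple
of the truncated kernel at `y - z`; both halves of the bound are convolution integrands. -/
lemma integrable_form (N : ℕ) (hN : 1 ≤ N) (s : ℝ) (hs : s ∈ Set.Ioo (0 : ℝ) 1)
    {φ ψ : EuclideanSpace ℝ (Fin N) → ℝ}
    (hφ : ContDiff ℝ 1 φ) (hφc : HasCompactSupport φ)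
    (hψ : ContDiff ℝ 1 ψ) (hψc : HasCompactSupport ψ) :
    Integrable (fun p : EuclideanSpace ℝ (Fin N) × EuclideanSpace ℝ (Fin N) =>
      (φ p.1 - φ p.2) * (ψ p.1 - ψ p.2) * ‖p.1 - p.2‖ ^ (-(N : ℝ) - 2 * s)) := by
  obtain ⟨C, hC0, hC⟩ := exists_diff_bound hφ hφc
  obtain ⟨D, hD0, hD⟩ := exists_diff_bound hψ hψc
  have hk := integrable_truncated_kernel N hN s hs
  have hS : Integrable ((tsupport φ).indicator (fun _ => (1 : ℝ))) :=
    (integrable_indicator_iff (isClosed_tsupport φ).measurableSet).2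
      (integrableOn_const hφc.isCompact.measure_lt_top.ne)
  have h1 := hS.convolution_integrand (ContinuousLinearMap.mul ℝ ℝ) hk
  have h2 := h1.swap
  refine ((h1.add h2).const_mul (C * D)).mono' ?_ (Filter.Eventually.of_forall fun p => ?_)
  · have := hφ.continuous
    have := hψ.continuous
    exact Measurable.aestronglyMeasurable (by fun_prop)
  · obtain ⟨y, z⟩ := p
    simp only [Pi.add_apply, Function.comp_apply, Prod.fst_swap, Prod.snd_swap,
      ContinuousLinearMap.mul_apply', norm_sub_rev z y, ← add_mul, norm_mul]
    set m := min ‖y - z‖ 1 with hm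
    have hm0 : 0 ≤ m := le_min (norm_nonneg _) zero_le_one
    have hK0 : 0 ≤ ‖y - z‖ ^ (-(N : ℝ) - 2 * s) := by positivity
    rw [Real.norm_of_nonneg hK0]
    by_cases hyz : z ∈ tsupport φ ∨ y ∈ tsupport φ
    · have hone : 1 ≤ (tsupport φ).indicator (fun _ => (1 : ℝ)) z +
          (tsupport φ).indicator (fun _ => (1 : ℝ)) y := by
        have nn : ∀ x, 0 ≤ (tsupport φ).indicator (fun _ => (1 : ℝ)) x := fun x =>
          Set.indicator_nonneg (fun _ _ => zero_le_one) x
        rcases hyz with h | h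
        · rw [Set.indicator_of_mem h]; linarith [nn y]
        · rw [Set.indicator_of_mem h]; linarith [nn z]
      calc ‖φ y - φ z‖ * ‖ψ y - ψ z‖ * ‖y - z‖ ^ (-(N : ℝ) - 2 * s)
          ≤ (C * m) * (D * m) * ‖y - z‖ ^ (-(N : ℝ) - 2 * s) := by
            gcongr
            · exact hC y z
            · exact hD y z
        _ = (C * D) * (1 * (m ^ 2 * ‖y - z‖ ^ (-(N : ℝ) - 2 * s))) := by ring
        _ ≤ _ := by gcongr
    · push Not at hyz
      rw [image_eq_zero_of_notMem_tsupport hyz.1, image_eq_zero_of_notMem_tsupport hyz.2,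
        Set.indicator_of_notMem hyz.1, Set.indicator_of_notMem hyz.2]
      simp

/-! ### The Gagliardo form and the fractional Laplacian -/

/-- The Gagliardo form of `φ` and `ψ` is the pairing of `φ` with the fractional Laplacian of `ψ`. -/
lemma integral_form_eq (N : ℕ) (hN : 1 ≤ N) (s : ℝ) (hs : s ∈ Set.Ioo (0 : ℝ) 1)
    {φ ψ : EuclideanSpace ℝ (Fin N) → ℝ}
    (hφ : ContDiff ℝ 1 φ) (hφc : HasCompactSupport φ)
    (hψ : ContDiff ℝ 2 ψ) (hψc : HasCompactSupport ψ) :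
    cNs N s / 2 * ∫ p : EuclideanSpace ℝ (Fin N) × EuclideanSpace ℝ (Fin N),
      (φ p.1 - φ p.2) * (ψ p.1 - ψ p.2) * ‖p.1 - p.2‖ ^ (-(N : ℝ) - 2 * s) =
    ∫ z, φ z * fracLap N s ψ z := by
  have hint := integrable_form N hN s hs hφ hφc (hψ.of_le (by norm_num)) hψc
  have hcφ := hφ.continuous
  have hcψ := hψ.continuous
  have hk := integrable_truncated_kernel N hN s hs
  have hmp := measurePreserving_prod_add (volume : Measure (EuclideanSpace ℝ (Fin N)))
    (volume : Measure (EuclideanSpace ℝ (Fin N)))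
  have hemb : MeasurableEmbedding (fun p : EuclideanSpace ℝ (Fin N) × EuclideanSpace ℝ (Fin N) =>
      (p.1, p.1 + p.2)) :=
    (MeasurableEquiv.shearAddRight (EuclideanSpace ℝ (Fin N))).measurableEmbedding
  have hint' := (hmp.integrable_comp_emb hemb).2 hint
  have hL := hmp.integral_comp hemb (fun p => (φ p.1 - φ p.2) * (ψ p.1 - ψ p.2) *
    ‖p.1 - p.2‖ ^ (-(N : ℝ) - 2 * s))
  simp only [Function.comp_def, sub_add_cancel_left, norm_neg] at hint' hL
  rw [Measure.volume_eq_prod, ← hL, integral_prod_symm _ hint']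
  -- At fixed `h`, translating by `h` the terms that contain `φ (z + h)` produces the second
  -- difference of `ψ`.
  have hinner : ∀ h : EuclideanSpace ℝ (Fin N),
      ∫ z, (φ z - φ (z + h)) * (ψ z - ψ (z + h)) * ‖h‖ ^ (-(N : ℝ) - 2 * s) =
      ∫ z, φ z * ((2 * ψ z - ψ (z + h) - ψ (z - h)) * ‖h‖ ^ (-(N : ℝ) - 2 * s)) := by
    intro h
    have i1 : Integrable (fun z => φ z * (ψ z - ψ (z + h))) :=
      Continuous.integrable_of_hasCompactSupport (by fun_prop) hφc.mul_right
    have i2 : Integrable (fun z => φ z * (ψ (z - h) - ψ z)) :=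
      Continuous.integrable_of_hasCompactSupport (by fun_prop) hφc.mul_right
    have i3 := i2.comp_add_right h
    have e3 := integral_add_right_eq_self (μ := volume) (fun z => φ z * (ψ (z - h) - ψ z)) h
    simp only [add_sub_cancel_right] at i3 e3
    simp only [← mul_assoc]
    rw [integral_mul_const, integral_mul_const]
    congr 1
    calc ∫ z, (φ z - φ (z + h)) * (ψ z - ψ (z + h))
        = ∫ z, (φ z * (ψ z - ψ (z + h)) - φ (z + h) * (ψ z - ψ (z + h))) := by
          congr 1; funext z; ring
      _ = ∫ z, (φ z * (ψ z - ψ (z + h)) - φ z * (ψ (z - h) - ψ z)) := by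
          rw [integral_sub i1 i3, integral_sub i1 i2, e3]
      _ = _ := by congr 1; funext z; ring
  simp only [hinner]
  obtain ⟨C, hC0, hC⟩ := exists_second_diff_bound hψ hψc
  have hφi : Integrable φ := hcφ.integrable_of_hasCompactSupport hφc
  have hprod : Integrable (fun p : EuclideanSpace ℝ (Fin N) × EuclideanSpace ℝ (Fin N) =>
      φ p.1 * ((2 * ψ p.1 - ψ (p.1 + p.2) - ψ (p.1 - p.2)) *
        ‖p.2‖ ^ (-(N : ℝ) - 2 * s))) (volume.prod volume) := by
    refine ((hφi.norm.mul_prod hk).const_mul C).mono'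
      (Measurable.aestronglyMeasurable (by fun_prop)) (Filter.Eventually.of_forall fun p => ?_)
    have hK0 : 0 ≤ ‖p.2‖ ^ (-(N : ℝ) - 2 * s) := by positivity
    rw [norm_mul, norm_mul, Real.norm_of_nonneg hK0]
    calc _ ≤ ‖φ p.1‖ * ((C * (min ‖p.2‖ 1) ^ 2) * ‖p.2‖ ^ (-(N : ℝ) - 2 * s)) := by
          gcongr
          exact hC _ _
      _ = _ := by ring
  rw [← integral_integral_swap hprod, ← integral_const_mul]
  congr 1; funext z
  rw [integral_const_mul, fracLap]; ring

/-! ### Derivatives along the flow `exp (tL)` -/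

lemma hasDerivAt_comp_flow {E : Type*} [NormedAddCommGroup E] [NormedSpace ℝ E]
    [CompleteSpace E] (L : E →L[ℝ] E) {w : E → ℝ} (hw : Differentiable ℝ w) (x : E) (t : ℝ) :
    HasDerivAt (fun t : ℝ => w (NormedSpace.exp (t • L) x))
      (fderiv ℝ w (NormedSpace.exp (t • L) x) (L (NormedSpace.exp (t • L) x))) t := by
  have h1 := (hasDerivAt_exp_smul_const' (𝕂 := ℝ) L t).clm_apply (hasDerivAt_const t x)
  have h2 := (hw (NormedSpace.exp (t • L) x)).hasFDerivAt.comp_hasDerivAt t h1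
  refine h2.congr_deriv ?_
  simp

lemma hasDerivAt_norm_rpow_flow {E : Type*} [NormedAddCommGroup E] [InnerProductSpace ℝ E]
    [CompleteSpace E] (L : E →L[ℝ] E) (α : ℝ) (h : E) (t : ℝ)
    (hne : NormedSpace.exp (t • L) h ≠ 0) :
    HasDerivAt (fun t : ℝ => ‖NormedSpace.exp (t • L) h‖ ^ α)
      (‖NormedSpace.exp (t • L) h‖ ^ α * (α * ⟪L (NormedSpace.exp (t • L) h),
        NormedSpace.exp (t • L) h⟫ / ‖NormedSpace.exp (t • L) h‖ ^ 2)) t := by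
  have h1 := (hasDerivAt_exp_smul_const' (𝕂 := ℝ) L t).clm_apply (hasDerivAt_const t h)
  have h2 := h1.norm_sq
  have hpos : 0 < ‖NormedSpace.exp (t • L) h‖ := norm_pos_iff.2 hne
  have h3 := h2.rpow_const (p := α / 2) (Or.inl (by positivity))
  have e : ∀ r : ℝ, 0 ≤ r → (r ^ 2) ^ (α / 2) = r ^ α := by
    intro r hr
    rw [← Real.rpow_natCast, ← Real.rpow_mul hr]
    congr 1; push_cast; ring
  have e2 : (fun t : ℝ => (‖NormedSpace.exp (t • L) h‖ ^ 2) ^ (α / 2)) =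
      fun t : ℝ => ‖NormedSpace.exp (t • L) h‖ ^ α := funext fun t => e _ (norm_nonneg _)
  rw [e2] at h3
  refine h3.congr_deriv ?_
  rw [Real.rpow_sub_one (by positivity), e _ hpos.le, real_inner_comm]
  simp
  ring

/-- Integration-by-parts identity for the kernel `ω_A`:
`∬ (w(y)-w(z))(v(y)-v(z)) |y-z|^{-N-2s} ω_A(y,z) dy dz
  = -∫ (∇w·Az)(-Δ)^s v - ∫ (∇v·Az)(-Δ)^s w`. -/
theorem statement10 (N : ℕ) (hN : 1 ≤ N) (s : ℝ) (hs : s ∈ Set.Ioo (0 : ℝ) 1)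
    (A : Matrix (Fin N) (Fin N) ℝ)
    (w v : EuclideanSpace ℝ (Fin N) → ℝ)
    (hw : ContDiff ℝ (⊤ : ℕ∞) w) (hwc : HasCompactSupport w)
    (hv : ContDiff ℝ (⊤ : ℕ∞) v) (hvc : HasCompactSupport v) :
    Integrable (fun p : EuclideanSpace ℝ (Fin N) × EuclideanSpace ℝ (Fin N) =>
      (w p.1 - w p.2) * (v p.1 - v p.2) * ‖p.1 - p.2‖ ^ (-(N : ℝ) - 2 * s) *
        omegaA N s A p.1 p.2) ∧
    (∫ p : EuclideanSpace ℝ (Fin N) × EuclideanSpace ℝ (Fin N),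
      (w p.1 - w p.2) * (v p.1 - v p.2) * ‖p.1 - p.2‖ ^ (-(N : ℝ) - 2 * s) *
        omegaA N s A p.1 p.2) =
      - (∫ z : EuclideanSpace ℝ (Fin N),
          ⟪gradient w z, Matrix.toEuclideanLin A z⟫ * fracLap N s v z)
      - (∫ z : EuclideanSpace ℝ (Fin N),
          ⟪gradient v z, Matrix.toEuclideanLin A z⟫ * fracLap N s w z) := by
  set L : EuclideanSpace ℝ (Fin N) →L[ℝ] EuclideanSpace ℝ (Fin N) :=
    (Matrix.toEuclideanLin A).toContinuousLinearMap with hL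
  have hLA : ∀ x, Matrix.toEuclideanLin A x = L x := fun x => rfl
  have htr : LinearMap.trace ℝ _ L.toLinearMap = A.trace := by
    have e : Matrix.toEuclideanLin A =
        Matrix.toLin (PiLp.basisFun 2 ℝ (Fin N)) (PiLp.basisFun 2 ℝ (Fin N)) A :=
      DFunLike.congr_fun (Matrix.toLpLin_eq_toLin 2 2) A
    rw [hL, LinearMap.coe_toContinuousLinearMap, e, Matrix.trace_toLin_eq]
  have hgrad : ∀ (u : EuclideanSpace ℝ (Fin N) → ℝ) z,
      ⟪gradient u z, Matrix.toEuclideanLin A z⟫ = fderiv ℝ u z (L z) := fun u z => by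
    rw [inner_gradient_left, hLA]
  simp only [hgrad]
  -- The derivatives of `w` and `v` along the linear vector field `L`.
  set φ : EuclideanSpace ℝ (Fin N) → ℝ := fun z => fderiv ℝ w z (L z) with hφdef
  set ψ : EuclideanSpace ℝ (Fin N) → ℝ := fun z => fderiv ℝ v z (L z) with hψdef
  have hle : (2 : WithTop ℕ∞) ≤ ((⊤ : ℕ∞) : WithTop ℕ∞) :=
    WithTop.coe_le_coe.2 (le_top (a := (2 : ℕ∞)))
  have hsm : ∀ u : EuclideanSpace ℝ (Fin N) → ℝ, ContDiff ℝ (⊤ : ℕ∞) u →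
      ContDiff ℝ 1 (fun z => fderiv ℝ u z (L z)) := fun u hu =>
    ContDiff.clm_apply ((hu.of_le hle).fderiv_right (m := 1) (by norm_num)) L.contDiff
  have hcs : ∀ u : EuclideanSpace ℝ (Fin N) → ℝ, HasCompactSupport u →
      HasCompactSupport (fun z => fderiv ℝ u z (L z)) := fun u hu =>
    (hu.fderiv ℝ).mono' fun z hz => subset_closure fun h => hz (by simp [h])
  have hφ : ContDiff ℝ 1 φ := hsm w hw
  have hψ : ContDiff ℝ 1 ψ := hsm v hv
  have hφc : HasCompactSupport φ := hcs w hwc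
  have hψc : HasCompactSupport ψ := hcs v hvc
  have hw1 : ContDiff ℝ 1 w := hw.of_le (by exact_mod_cast le_top)
  have hv1 : ContDiff ℝ 1 v := hv.of_le (by exact_mod_cast le_top)
  have hw2 : ContDiff ℝ 2 w := hw.of_le hle
  have hv2 : ContDiff ℝ 2 v := hv.of_le hle
  have cw := hw1.continuous
  have cv := hv1.continuous
  have cφ := hφ.continuous
  have cψ := hψ.continuous
  have iwv := integrable_form N hN s hs hw1 hwc hv1 hvc
  have iφv := integrable_form N hN s hs hφ hφc hv1 hvc
  have iψw := integrable_form N hN s hs hψ hψc hw1 hwc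
  rw [← integral_form_eq N hN s hs hφ hφc hv2 hvc, ← integral_form_eq N hN s hs hψ hψc hw2 hwc]
  set α : ℝ := -(N : ℝ) - 2 * s with hα
  -- `q` is the logarithmic derivative of the kernel along the flow.
  set q : EuclideanSpace ℝ (Fin N) × EuclideanSpace ℝ (Fin N) → ℝ := fun p =>
    α * ⟪L (p.1 - p.2), p.1 - p.2⟫ / ‖p.1 - p.2‖ ^ 2 with hq
  have hqm : Measurable q := by fun_prop
  have hqb : ∀ p, ‖q p‖ ≤ |α| * ‖L‖ := by
    intro p
    simp only [hq, norm_div, norm_mul, Real.norm_eq_abs]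
    refine div_le_of_le_mul₀ (by positivity) (by positivity) ?_
    rw [abs_of_nonneg (sq_nonneg ‖p.1 - p.2‖), mul_assoc]
    gcongr
    calc _ ≤ ‖L (p.1 - p.2)‖ * ‖p.1 - p.2‖ := abs_real_inner_le_norm _ _
      _ ≤ ‖L‖ * ‖p.1 - p.2‖ * ‖p.1 - p.2‖ := by gcongr; exact L.le_opNorm _
      _ = _ := by ring
  have iq := iwv.mul_bdd (c := |α| * ‖L‖) hqm.aestronglyMeasurable
    (Filter.Eventually.of_forall hqb)
  have hω : (fun p : EuclideanSpace ℝ (Fin N) × EuclideanSpace ℝ (Fin N) =>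
      (w p.1 - w p.2) * (v p.1 - v p.2) * ‖p.1 - p.2‖ ^ α * omegaA N s A p.1 p.2) =
      fun p => cNs N s / 2 * (2 * A.trace *
        ((w p.1 - w p.2) * (v p.1 - v p.2) * ‖p.1 - p.2‖ ^ α) +
        (w p.1 - w p.2) * (v p.1 - v p.2) * ‖p.1 - p.2‖ ^ α * q p) := by
    funext p
    simp only [omegaA, hq, hLA, hα]
    ring
  rw [hω]
  refine ⟨((iwv.const_mul _).add iq).const_mul _, ?_⟩
  have hdetT := det_exp_smul L
  have hinj : ∀ (t : ℝ) (x : EuclideanSpace ℝ (Fin N)), NormedSpace.exp (t • L) x = 0 → x = 0 := by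
    intro t x hx
    have hd : LinearMap.det (NormedSpace.exp (t • L) :
        EuclideanSpace ℝ (Fin N) →L[ℝ] EuclideanSpace ℝ (Fin N)).toLinearMap ≠ 0 := by
      rw [hdetT]; positivity
    exact (LinearMap.equivOfDetNeZero _ hd).injective (hx.trans (map_zero _).symm)
  have hexp0 : NormedSpace.exp ((0 : ℝ) • L) = 1 := by
    rw [show (0 : ℝ) • L = 0 from zero_smul ℝ L, NormedSpace.exp_zero]
  have hHaar : (volume : Measure (EuclideanSpace ℝ (Fin N) ×
      EuclideanSpace ℝ (Fin N))).IsAddHaarMeasure :=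
    Measure.prod.instIsAddHaarMeasure volume volume
  -- The flow of `L` acts diagonally on pairs, so the divergence of its generator is `2 tr A`.
  have hflow := integral_flow_deriv
    (volume : Measure (EuclideanSpace ℝ (Fin N) × EuclideanSpace ℝ (Fin N)))
    (fun t => (NormedSpace.exp (t • L) : EuclideanSpace ℝ (Fin N) →L[ℝ] _).prodMap
      (NormedSpace.exp (t • L)))
    (by
      have hc : Continuous fun t : ℝ => NormedSpace.exp (t • L) :=
        continuous_iff_continuousAt.2 fun t => (hasDerivAt_exp_smul_const L t).continuousAt
      exact ((hc.comp continuous_snd).clm_apply continuous_fst.fst).prodMk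
        ((hc.comp continuous_snd).clm_apply continuous_fst.snd))
    (by rw [hexp0]; rfl)
    (2 * A.trace)
    (fun t => by
      have h := LinearMap.det_prodMap
        (NormedSpace.exp (t • L) : EuclideanSpace ℝ (Fin N) →L[ℝ] _).toLinearMap
        (NormedSpace.exp (t • L) : EuclideanSpace ℝ (Fin N) →L[ℝ] _).toLinearMap
      rw [hdetT, htr, ← Real.exp_add] at h
      rw [ContinuousLinearMap.coe_prodMap, h]
      ring_nf)
    (f' := fun p => (φ p.1 - φ p.2) * (v p.1 - v p.2) * ‖p.1 - p.2‖ ^ α +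
      (ψ p.1 - ψ p.2) * (w p.1 - w p.2) * ‖p.1 - p.2‖ ^ α +
      (w p.1 - w p.2) * (v p.1 - v p.2) * ‖p.1 - p.2‖ ^ α * q p)
    iwv ((iφv.add iψw).add iq) (by fun_prop)
    (by
      rintro ⟨y, z⟩ t
      have dw := (hasDerivAt_comp_flow L (hw1.differentiable one_ne_zero) y t).sub
        (hasDerivAt_comp_flow L (hw1.differentiable one_ne_zero) z t)
      have dv := (hasDerivAt_comp_flow L (hv1.differentiable one_ne_zero) y t).sub
        (hasDerivAt_comp_flow L (hv1.differentiable one_ne_zero) z t)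
      by_cases hyz : y = z
      -- On the diagonal `f` and `f'` vanish identically along the flow.
      · subst hyz
        simpa using hasDerivAt_const t (0 : ℝ)
      · have dK := hasDerivAt_norm_rpow_flow L α (y - z) t
          (fun h => hyz (sub_eq_zero.1 (hinj t _ h)))
        simp only [map_sub] at dK
        refine ((dw.mul dv).mul dK).congr_deriv ?_
        simp only [Prod.map, hq, hφdef, hψdef, map_sub,
          Pi.mul_apply, Pi.sub_apply, ContinuousLinearMap.coe_prodMap']
        ring)
  have h1 := integral_add (iφv.add iψw) iq
  have h2 := integral_add iφv iψw
  simp only [Pi.add_apply] at h1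
  rw [h1, h2] at hflow
  rw [integral_const_mul, integral_add (iwv.const_mul _) iq, integral_const_mul]
  linear_combination (cNs N s / 2) * hflow
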